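/- arXiv:1809.03984 — 2 statements merged into one kernel-verified Lean document; each statement's English description precedes it below -/
import Mathlib

section
/- Let S be an inf-semilattice ordered Cu-semigroup satisfying (O5) and weak cancellation, let k ≥ 1, and let x ∈ S. Then: (a) if x is weakly (k,n)-divisible for some n ≥ 1, then x is (k,N)-divisible, where N = k(M−1)+1 and M = max{ n^r·(k−r) + n^{r−1} : r = 1, …, k } (so N depends only on k and n); (b) x is weakly (k,ω)-divisible if and only if x is (k,ω)-divisible. -/
/-- The way-below (compact containment) relation on a partially ordered set:
`WayBelow x y` holds if whenever `(y n)` is an increasing sequence admitting a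
supremum `s` with `y ≤ s`, then `x ≤ y n` for some `n`. -/
def WayBelow {S : Type*} [PartialOrder S] (x y : S) : Prop :=
  ∀ f : ℕ → S, Monotone f → ∀ s : S, IsLUB (Set.range f) s → y ≤ s → ∃ n, x ≤ f n

/-- An abstract Cuntz semigroup (Cu-semigroup): a positively ordered commutative
monoid satisfying the axioms (O1)-(O4). -/
class CuSemigroup (S : Type*) [AddCommMonoid S] [PartialOrder S] : Prop where
  /-- The order is positive. -/
  zero_le : ∀ x : S, 0 ≤ x
  /-- Addition is order-preserving. -/
  add_le_add : ∀ {x y z w : S}, x ≤ y → z ≤ w → x + z ≤ y + w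
  /-- (O1): every increasing sequence has a supremum. -/
  O1 : ∀ f : ℕ → S, Monotone f → ∃ s : S, IsLUB (Set.range f) s
  /-- (O2): every element is the supremum of a `≪`-increasing sequence. -/
  O2 : ∀ x : S, ∃ f : ℕ → S, (∀ n, WayBelow (f n) (f (n + 1))) ∧ IsLUB (Set.range f) x
  /-- (O3): the way-below relation is additive. -/
  O3 : ∀ {x' x y' y : S}, WayBelow x' x → WayBelow y' y → WayBelow (x' + y') (x + y)
  /-- (O4): addition is compatible with suprema of increasing sequences. -/
  O4 : ∀ (f g : ℕ → S), Monotone f → Monotone g → ∀ a b : S,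
        IsLUB (Set.range f) a → IsLUB (Set.range g) b →
        IsLUB (Set.range fun n => f n + g n) (a + b)

/-- Axiom (O5) (almost algebraic order). -/
def O5 (S : Type*) [AddCommMonoid S] [PartialOrder S] : Prop :=
  ∀ x' x z : S, WayBelow x' x → x ≤ z → ∃ w : S, x' + w ≤ z ∧ z ≤ x + w

/-- Axiom (O6+). -/
def O6plus (S : Type*) [AddCommMonoid S] [PartialOrder S] : Prop :=
  ∀ a b c x' x y' y : S, a ≤ b + c →
    WayBelow x' x → x ≤ a → x ≤ b → WayBelow y' y → y ≤ a → y ≤ c →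
    ∃ e f : S, a ≤ e + f ∧ WayBelow x' e ∧ e ≤ a ∧ e ≤ b ∧
      WayBelow y' f ∧ f ≤ a ∧ f ≤ c

/-- Weak cancellation: `x + z ≪ y + z` implies `x ≪ y`. -/
def WeakCancel (S : Type*) [AddCommMonoid S] [PartialOrder S] : Prop :=
  ∀ x y z : S, WayBelow (x + z) (y + z) → WayBelow x y

/-- A Cu-semigroup is countably based if there is a countable subset `B` such that every
element is the supremum of a `≪`-increasing sequence with elements in `B`. -/
def CountablyBased (S : Type*) [AddCommMonoid S] [PartialOrder S] : Prop :=
  ∃ B : Set S, B.Countable ∧ ∀ x : S, ∃ f : ℕ → S, (∀ n, f n ∈ B) ∧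
    (∀ n, WayBelow (f n) (f (n + 1))) ∧ IsLUB (Set.range f) x

/-- Addition distributes over the infimum operation. -/
def InfDistrib (S : Type*) [AddCommMonoid S] [SemilatticeInf S] : Prop :=
  ∀ x y z : S, (x + z) ⊓ (y + z) = (x ⊓ y) + z

/-- A functional on an ordered monoid: a `[0,∞]`-valued map preserving `0`, addition,
order, and suprema of increasing sequences. -/
def IsFunctional {S : Type*} [AddCommMonoid S] [PartialOrder S] (l : S → ENNReal) : Prop :=
  l 0 = 0 ∧ (∀ x y : S, l (x + y) = l x + l y) ∧ (∀ x y : S, x ≤ y → l x ≤ l y) ∧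
    ∀ (f : ℕ → S) (s : S), Monotone f → IsLUB (Set.range f) s → l s = ⨆ n, l (f n)

/-- An element is soft if each of its way-below approximants `x'` satisfies
`(k+1)·x' ≤ k·x` for some `k`. -/
def Soft {S : Type*} [AddCommMonoid S] [PartialOrder S] (x : S) : Prop :=
  ∀ x' : S, WayBelow x' x → ∃ k : ℕ, (k + 1) • x' ≤ k • x

/-- An element `x` is full if `∞·x = sup_n n·x` exists and dominates every element. -/
def IsFull {S : Type*} [AddCommMonoid S] [PartialOrder S] (x : S) : Prop :=
  ∃ s : S, IsLUB (Set.range fun n : ℕ => n • x) s ∧ ∀ t : S, t ≤ s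

/-- `x` is `(k,n)`-divisible. -/
def Divisible {S : Type*} [AddCommMonoid S] [PartialOrder S] (k n : ℕ) (x : S) : Prop :=
  ∀ x' : S, WayBelow x' x → ∃ y : S, k • y ≤ x ∧ x' ≤ n • y

/-- `x` is `(k,ω)`-divisible. -/
def DivisibleOmega {S : Type*} [AddCommMonoid S] [PartialOrder S] (k : ℕ) (x : S) : Prop :=
  ∀ x' : S, WayBelow x' x → ∃ (y : S) (n : ℕ), k • y ≤ x ∧ x' ≤ n • y

/-- `x` is weakly `(k,n)`-divisible. -/
def WeaklyDivisible {S : Type*} [AddCommMonoid S] [PartialOrder S] (k n : ℕ) (x : S) :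
    Prop :=
  ∀ x' : S, WayBelow x' x → ∃ y : Fin n → S, (∀ j, k • y j ≤ x) ∧ x' ≤ ∑ j, y j

/-- `x` is weakly `(k,ω)`-divisible. -/
def WeaklyDivisibleOmega {S : Type*} [AddCommMonoid S] [PartialOrder S] (k : ℕ) (x : S) :
    Prop :=
  ∀ x' : S, WayBelow x' x → ∃ (n : ℕ) (y : Fin n → S), (∀ j, k • y j ≤ x) ∧ x' ≤ ∑ j, y j


section CuHelpers
variable {S : Type*} [AddCommMonoid S] [SemilatticeInf S] [CuSemigroup S]

theorem cu_wb_le {x y : S} (h : WayBelow x y) : x ≤ y := by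
  obtain ⟨_, hn⟩ := h (fun _ => y) (fun _ _ _ => le_rfl) y (by simp) le_rfl
  exact hn

theorem cu_wb_le_trans {x y z : S} (h : WayBelow x y) (h' : y ≤ z) : WayBelow x z :=
  fun f hf s hs hz => h f hf s hs (h'.trans hz)

theorem cu_le_wb_trans {x y z : S} (h : x ≤ y) (h' : WayBelow y z) : WayBelow x z :=
  fun f hf s hs hz => let ⟨n, hn⟩ := h' f hf s hs hz; ⟨n, h.trans hn⟩

theorem cu_wb_zero (x : S) : WayBelow 0 x :=
  fun _ _ _ _ _ => ⟨0, CuSemigroup.zero_le _⟩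

theorem cu_approx (x : S) : ∃ f : ℕ → S, Monotone f ∧ (∀ n, WayBelow (f n) x) ∧
    IsLUB (Set.range f) x := by
  obtain ⟨f, hf, hx⟩ := CuSemigroup.O2 x
  exact ⟨f, monotone_nat_of_le_succ fun n => cu_wb_le (hf n),
    fun n => cu_wb_le_trans (hf n) (hx.1 ⟨n + 1, rfl⟩), hx⟩

theorem cu_interp {x y : S} (h : WayBelow x y) : ∃ w, WayBelow x w ∧ WayBelow w y := by
  obtain ⟨f, hf, hx⟩ := CuSemigroup.O2 y
  obtain ⟨n, hn⟩ := h f (monotone_nat_of_le_succ fun n => cu_wb_le (hf n)) y hx le_rfl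
  exact ⟨f (n + 1), cu_le_wb_trans hn (hf n),
    cu_wb_le_trans (hf (n + 1)) (hx.1 ⟨n + 2, rfl⟩)⟩

theorem cu_add_le {a b c d : S} (h : a ≤ b) (h' : c ≤ d) : a + c ≤ b + d :=
  CuSemigroup.add_le_add h h'

theorem cu_nsmul_le {a b : S} (h : a ≤ b) (n : ℕ) : n • a ≤ n • b := by
  induction n with
  | zero => simp
  | succ n ih => rw [succ_nsmul, succ_nsmul]; exact cu_add_le ih h

theorem cu_nsmul_mono {a : S} {m n : ℕ} (h : m ≤ n) : m • a ≤ n • a := by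
  obtain ⟨c, rfl⟩ := Nat.exists_eq_add_of_le h
  rw [add_nsmul]
  calc m • a = m • a + 0 := (add_zero _).symm
    _ ≤ _ := cu_add_le le_rfl (CuSemigroup.zero_le _)

theorem cu_nsmul_wb {a b : S} (h : WayBelow a b) (n : ℕ) : WayBelow (n • a) (n • b) := by
  induction n with
  | zero => rw [zero_nsmul]; exact cu_wb_zero _
  | succ n ih => rw [succ_nsmul, succ_nsmul]; exact CuSemigroup.O3 ih h

theorem cu_sum_le {n : ℕ} {f g : Fin n → S} (h : ∀ i, f i ≤ g i) : ∑ i, f i ≤ ∑ i, g i := by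
  induction n with
  | zero => simp
  | succ n ih =>
    rw [Fin.sum_univ_succ, Fin.sum_univ_succ]
    exact cu_add_le (h 0) (ih fun i => h i.succ)

theorem cu_nsmul_lub {f : ℕ → S} (hf : Monotone f) {a : S} (ha : IsLUB (Set.range f) a) (D : ℕ) :
    IsLUB (Set.range fun n => D • f n) (D • a) := by
  induction D with
  | zero => simp
  | succ D ih =>
    simp only [succ_nsmul]
    exact CuSemigroup.O4 _ _ (fun i j h => cu_nsmul_le (hf h) D) hf _ _ ih ha

theorem cu_shrink_nsmul {s a : S} {D : ℕ} (h : WayBelow s (D • a)) :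
    ∃ b, WayBelow b a ∧ s ≤ D • b := by
  obtain ⟨f, hf, hw, hl⟩ := cu_approx a
  obtain ⟨n, hn⟩ := h _ (fun i j h => cu_nsmul_le (hf h) D) _ (cu_nsmul_lub hf hl D) le_rfl
  exact ⟨f n, hw n, hn⟩

theorem cu_shrink_add {s a b : S} (h : WayBelow s (a + b)) :
    ∃ a' b', WayBelow a' a ∧ WayBelow b' b ∧ WayBelow s (a' + b') := by
  obtain ⟨t, hst, ht⟩ := cu_interp h
  obtain ⟨f, hf, hfw, hfl⟩ := cu_approx a
  obtain ⟨g, hg, hgw, hgl⟩ := cu_approx b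
  obtain ⟨n, hn⟩ := ht _ (fun i j h => cu_add_le (hf h) (hg h)) _
    (CuSemigroup.O4 f g hf hg a b hfl hgl) le_rfl
  exact ⟨f n, g n, hfw n, hgw n, cu_wb_le_trans hst hn⟩

theorem cu_shrink_sum {n : ℕ} {s : S} {y : Fin n → S} (h : WayBelow s (∑ j, y j)) :
    ∃ y' : Fin n → S, (∀ j, WayBelow (y' j) (y j)) ∧ WayBelow s (∑ j, y' j) := by
  induction n generalizing s with
  | zero => exact ⟨y, fun j => j.elim0, h⟩
  | succ n ih =>
    rw [Fin.sum_univ_succ] at h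
    obtain ⟨a, b, ha, hb, hs⟩ := cu_shrink_add h
    obtain ⟨y', hy', hb'⟩ := ih hb
    refine ⟨Fin.cons a y', ?_, ?_⟩
    · intro j
      refine Fin.cases ?_ (fun i => ?_) j
      · simpa using ha
      · simpa using hy' i
    · rw [Fin.sum_univ_succ]
      simp only [Fin.cons_zero, Fin.cons_succ]
      exact cu_wb_le_trans hs (cu_add_le le_rfl (cu_wb_le hb'))

/-- Cancellation with a gap. -/
theorem cu_cancel (hwc : WeakCancel S) {p q z z' : S} (hz : WayBelow z' z)
    (h : p + z ≤ q + z') : p ≤ q := by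
  obtain ⟨f, hf, hw, hl⟩ := cu_approx p
  refine hl.2 ?_
  rintro _ ⟨n, rfl⟩
  exact cu_wb_le (hwc _ _ z' (cu_wb_le_trans (CuSemigroup.O3 (hw n) hz) h))

theorem cu_inf_expand (hdist : InfDistrib S) (a b c : S) (N : ℕ) (s : S)
    (h : ∀ i j, i + j = N → c ≤ i • a + j • b + s) : c ≤ N • (a ⊓ b) + s := by
  induction N generalizing s with
  | zero => simpa using h 0 0 rfl
  | succ N ih =>
    have := ih ((a ⊓ b) + s) (by
      intro i j hij
      have e : i • a + j • b + (a ⊓ b + s) = (a ⊓ b) + (i • a + j • b + s) := by abel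
      rw [e, ← hdist]
      refine le_inf ?_ ?_
      · have := h (i + 1) j (by omega)
        rwa [succ_nsmul, show i • a + a + j • b + s = a + (i • a + j • b + s) by abel] at this
      · have := h i (j + 1) (by omega)
        rwa [succ_nsmul, show i • a + (j • b + b) + s = b + (i • a + j • b + s) by abel] at this)
    rwa [← add_assoc, ← succ_nsmul] at this

theorem cu_inf_two (hdist : InfDistrib S) {a b c : S} {p q : ℕ}
    (ha : c ≤ (p + 1) • a) (hb : c ≤ (q + 1) • b) : c ≤ (p + q + 1) • (a ⊓ b) := by
  have := cu_inf_expand hdist a b c (p + q + 1) 0 (by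
    intro i j hij
    rw [add_zero]
    rcases Nat.lt_or_ge i (p + 1) with hi | hi
    · calc c ≤ (q + 1) • b := hb
        _ ≤ j • b := cu_nsmul_mono (by omega)
        _ = 0 + j • b := (zero_add _).symm
        _ ≤ _ := cu_add_le (CuSemigroup.zero_le _) le_rfl
    · calc c ≤ (p + 1) • a := ha
        _ ≤ i • a := cu_nsmul_mono hi
        _ = i • a + 0 := (add_zero _).symm
        _ ≤ _ := cu_add_le le_rfl (CuSemigroup.zero_le _))
  simpa using this

theorem cu_inf_family (hdist : InfDistrib S) {c : S} {m n : ℕ} (u : Fin (n + 1) → S)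
    (h : ∀ j, c ≤ (m + 1) • u j) :
    ∃ z, (∀ j, z ≤ u j) ∧ c ≤ ((n + 1) * m + 1) • z := by
  induction n with
  | zero =>
    refine ⟨u 0, fun j => ?_, ?_⟩
    · rw [Fin.fin_one_eq_zero j]
    · simpa using h 0
  | succ n ih =>
    obtain ⟨z, hz, hc⟩ := ih (fun j => u j.succ) (fun j => h j.succ)
    refine ⟨u 0 ⊓ z, fun j => ?_, ?_⟩
    · refine Fin.cases inf_le_left (fun i => inf_le_right.trans (hz i)) j
    · have := cu_inf_two hdist (h 0) hc
      rwa [show (n + 1 + 1) * m + 1 = m + (n + 1) * m + 1 by ring]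

theorem cu_step (hdist : InfDistrib S) (h5 : O5 S) (hwc : WeakCancel S) {m n C : ℕ} {R s : S}
    {y y' : Fin (n + 1) → S} (hy : ∀ j, (m + 1) • y j ≤ R) (hy' : ∀ j, WayBelow (y' j) (y j))
    (hs : WayBelow s (C • R)) :
    ∃ z Q : S, z + Q ≤ R ∧ s ≤ (C * ((n + 1) * m + 1)) • z ∧ ∀ j, m • y' j ≤ Q := by
  have key : ∀ j, ∃ u, m • y' j + u ≤ R ∧ R ≤ (m + 1) • u := by
    intro j
    obtain ⟨v, h1, h2⟩ := cu_interp (hy' j)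
    have hvR : m • v ≤ R :=
      ((cu_nsmul_le (cu_wb_le h2) m).trans (cu_nsmul_mono (Nat.le_succ m))).trans (hy j)
    obtain ⟨u, hu1, hu2⟩ := h5 _ _ R (cu_nsmul_wb h1 m) hvR
    refine ⟨u, hu1, ?_⟩
    have hyu : y j ≤ u := by
      refine cu_cancel hwc (cu_nsmul_wb h2 m) ?_
      have := (hy j).trans hu2
      rwa [succ_nsmul, add_comm, add_comm (m • v)] at this
    rw [succ_nsmul]
    exact hu2.trans (cu_add_le (cu_nsmul_le ((cu_wb_le h2).trans hyu) m) le_rfl)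
  choose u hu1 hu2 using key
  obtain ⟨z0, hz0, hR⟩ := cu_inf_family hdist u hu2
  have hs' : WayBelow s ((C * ((n + 1) * m + 1)) • z0) := by
    rw [mul_nsmul']
    exact cu_wb_le_trans hs (cu_nsmul_le hR C)
  obtain ⟨z, hz, hsz⟩ := cu_shrink_nsmul hs'
  obtain ⟨w, hzw, hw⟩ := cu_interp hz
  have huR : ∀ j, u j ≤ R := fun j => by
    refine le_trans ?_ (hu1 j)
    calc u j = 0 + u j := (zero_add _).symm
      _ ≤ _ := cu_add_le (CuSemigroup.zero_le _) le_rfl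
  obtain ⟨Q, hQ1, hQ2⟩ := h5 z w R hzw (((cu_wb_le hw).trans (hz0 0)).trans (huR 0))
  refine ⟨z, Q, hQ1, hsz, fun j => ?_⟩
  refine cu_cancel hwc (cu_wb_le_trans hw (hz0 j)) ?_
  rw [add_comm Q]
  exact (hu1 j).trans hQ2

theorem cu_sum_const {n : ℕ} (Q : S) : ∑ _j : Fin n, Q = n • Q := by simp

theorem cu_iter (hdist : InfDistrib S) (h5 : O5 S) (hwc : WeakCancel S) {n B : ℕ} {s : S}
    (m : ℕ) : ∀ (C : ℕ) (R : S) (y : Fin (n + 1) → S), (∀ j, (m + 1) • y j ≤ R) →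
    WayBelow s (C • R) → WayBelow s (∑ j, y j) → C * ((n + 1) * m + 1) ≤ B →
    (∀ m' < m, (n + 1) * ((n + 1) * m' + 1) ≤ B) →
    ∃ z : Fin (m + 1) → S, ∑ i, z i ≤ R ∧ ∀ i, s ≤ B • z i := by
  induction m with
  | zero =>
    intro C R y _ hs _ hB _
    refine ⟨fun _ => R, by simp, fun _ => (cu_wb_le hs).trans (cu_nsmul_mono ?_)⟩
    simpa using hB
  | succ m ih =>
    intro C R y hy hs hsy hB hB'
    obtain ⟨y', hy', hsy'⟩ := cu_shrink_sum hsy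
    obtain ⟨z, Q, hzQ, hsz, hQ⟩ := cu_step hdist h5 hwc hy hy' hs
    have hyQ : ∀ j, y' j ≤ Q := fun j => by
      refine le_trans ?_ (hQ j)
      calc y' j = 1 • y' j := (one_nsmul _).symm
        _ ≤ _ := cu_nsmul_mono (by omega)
    obtain ⟨zs, h1, h2⟩ := ih (n + 1) Q y' hQ
      (cu_wb_le_trans hsy' ((cu_sum_le hyQ).trans (cu_sum_const Q).le)) hsy'
      (hB' m (Nat.lt_succ_self m)) (fun m' hm' => hB' m' (by omega))
    refine ⟨Fin.cons z zs, ?_, fun i => ?_⟩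
    · rw [Fin.sum_univ_succ]
      simp only [Fin.cons_zero, Fin.cons_succ]
      exact (cu_add_le le_rfl h1).trans hzQ
    · refine Fin.cases ?_ (fun i => ?_) i
      · simpa using hsz.trans (cu_nsmul_mono hB)
      · simpa using h2 i

theorem cu_core (hdist : InfDistrib S) (h5 : O5 S) (hwc : WeakCancel S) {k n : ℕ} (hk : 1 ≤ k)
    (hn : 1 ≤ n) {x x' x'' : S} (h1 : WayBelow x' x'') (h2 : WayBelow x'' x) (y : Fin n → S)
    (hy : ∀ j, k • y j ≤ x) (hs : x'' ≤ ∑ j, y j) :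
    ∃ w : S, k • w ≤ x ∧ x' ≤
      (k * (((Finset.Icc 1 k).sup fun r => n ^ r * (k - r) + n ^ (r - 1)) - 1) + 1) • w := by
  set F : ℕ → ℕ := fun r => n ^ r * (k - r) + n ^ (r - 1) with hF
  set M := (Finset.Icc 1 k).sup F with hM
  have hMr : ∀ r, 1 ≤ r → r ≤ k → F r ≤ M := fun r h h' =>
    Finset.le_sup (f := F) (Finset.mem_Icc.2 ⟨h, h'⟩)
  obtain ⟨m, rfl⟩ := Nat.exists_eq_add_of_le' hk
  obtain ⟨n, rfl⟩ := Nat.exists_eq_add_of_le' hn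
  have hM1 : (n + 1) * m + 1 ≤ M := by
    have := hMr 1 le_rfl (by omega)
    simpa [hF] using this
  have hM2 : ∀ m' < m, (n + 1) * ((n + 1) * m' + 1) ≤ M := by
    intro m' hm'
    refine le_trans ?_ (hMr 2 (by omega) (by omega))
    have e : F 2 = (n + 1) * ((n + 1) * (m - 1) + 1) := by
      simp only [hF, show m + 1 - 2 = m - 1 by omega, show 2 - 1 = 1 by rfl]
      ring
    rw [e]
    have : m' ≤ m - 1 := by omega
    gcongr
  obtain ⟨z, hz1, hz2⟩ := cu_iter hdist h5 hwc (B := M) m 1 x y hy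
    (by rw [one_nsmul]; exact cu_wb_le_trans h1 (cu_wb_le h2))
    (cu_wb_le_trans h1 hs) (by simpa using hM1) hM2
  obtain ⟨w, hw1, hw2⟩ := cu_inf_family hdist (m := M - 1) z (c := x') (fun j => by
    rw [Nat.sub_add_cancel (by omega)]; exact hz2 j)
  exact ⟨w, ((cu_sum_const w).symm.le.trans (cu_sum_le hw1)).trans hz1, hw2⟩

end CuHelpers

/-- In an inf-semilattice ordered Cu-semigroup with (O5) and weak cancellation:
(a) a weakly `(k,n)`-divisible element is `(k,N)`-divisible with
`N = k(M−1)+1`, `M = max {n^r(k−r)+n^(r−1) : r = 1,…,k}` (depending only on `k,n`);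
(b) an element is weakly `(k,ω)`-divisible iff it is `(k,ω)`-divisible. -/
theorem divisible_iff_weaklyDivisible {S : Type*} [AddCommMonoid S]
    [SemilatticeInf S] [CuSemigroup S] (hdist : InfDistrib S)
    (h5 : O5 S) (hwc : WeakCancel S) (k : ℕ) (hk : 1 ≤ k) (x : S) :
    (∀ n : ℕ, 1 ≤ n → WeaklyDivisible k n x →
      Divisible k
        (k * (((Finset.Icc 1 k).sup fun r => n ^ r * (k - r) + n ^ (r - 1)) - 1) + 1) x) ∧
    (WeaklyDivisibleOmega k x ↔ DivisibleOmega k x) := by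
  refine ⟨?_, ?_, ?_⟩
  · intro n hn hx x' hx'
    obtain ⟨x'', h1, h2⟩ := cu_interp hx'
    obtain ⟨y, hy, hs⟩ := hx x'' h2
    exact cu_core hdist h5 hwc hk hn h1 h2 y hy hs
  · intro hx x' hx'
    obtain ⟨x'', h1, h2⟩ := cu_interp hx'
    obtain ⟨n, y, hy, hs⟩ := hx x'' h2
    rcases Nat.eq_zero_or_pos n with rfl | hn
    · refine ⟨0, 0, ?_, ?_⟩
      · rw [smul_zero]; exact CuSemigroup.zero_le _
      · have := (cu_wb_le h1).trans hs
        simpa using this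
    · obtain ⟨w, hw, hw'⟩ := cu_core hdist h5 hwc hk hn h1 h2 y hy hs
      exact ⟨w, _, hw, hw'⟩
  · intro hx x' hx'
    obtain ⟨y, n, hy, hs⟩ := hx x' hx'
    exact ⟨n, fun _ => y, fun _ => hy, by rw [cu_sum_const]; exact hs⟩
end

section
/- Let S be a Cu-semigroup satisfying (O5). Assume that functionals on S are algebraically ordered: whenever ν_1, ν_2 are functionals on S with ν_1(s) ≤ ν_2(s) for all s ∈ S, there exists a functional ν with ν_1 + ν = ν_2. Let λ, μ be densely finite functionals on S with λ extreme and μ nonzero, assume μ is not a positive scalar multiple of λ (μ ≠ c·λ for every c ∈ (0,∞)), and assume S satisfies Edwards' condition for λ and for every positive scalar multiple of λ: min{λ'(x), λ'(y)} = sup{ λ'(z) : z ∈ S, z ≤ x and z ≤ y } for all x, y ∈ S and every λ' = c·λ with c ∈ (0,∞). Then for every ε > 0 there exists w ∈ S such that λ(w) < ε and μ(w) > 1/ε. -/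
/-- A functional is densely finite if it is finite on every element that is way below
some element. -/
def DenselyFinite {S : Type*} [AddCommMonoid S] [PartialOrder S] (lam : S → ENNReal) :
    Prop :=
  ∀ x : S, (∃ xt : S, WayBelow x xt) → lam x ≠ ⊤

/-- A (densely finite) functional `λ` is extreme if every functional dominated by a
finite positive multiple of `λ` is zero or a finite positive scalar multiple of `λ`. -/
def ExtremeFunctional {S : Type*} [AddCommMonoid S] [PartialOrder S]
    (lam : S → ENNReal) : Prop :=
  ∀ mu : S → ENNReal, IsFunctional mu → ∀ C : ENNReal, 0 < C → C ≠ ⊤ →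
    (∀ s : S, mu s ≤ C * lam s) →
    (∀ s : S, mu s = 0) ∨ ∃ c : ENNReal, 0 < c ∧ c ≠ ⊤ ∧ ∀ s : S, mu s = c * lam s

theorem ennreal_lift {a : ENNReal} (h : a ≠ ⊤) : ∃ r : NNReal, (r : ENNReal) = a :=
  ⟨a.toNNReal, ENNReal.coe_toNNReal h⟩

theorem wb_le {S : Type*} [PartialOrder S] {x y : S} (h : WayBelow x y) : x ≤ y := by
  obtain ⟨_, hn⟩ := h (fun _ => y) monotone_const y (by simp) le_rfl
  exact hn

theorem wb_trans {S : Type*} [PartialOrder S] {x y z : S} (h : WayBelow x y) (hz : y ≤ z) :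
    WayBelow x z := fun f hf s hs hzs => h f hf s hs (hz.trans hzs)

theorem fun_approx {S : Type*} [AddCommMonoid S] [PartialOrder S] [CuSemigroup S]
    {l : S → ENNReal} (hl : IsFunctional l) {z : S} {r : ENNReal} (hr : r < l z) :
    ∃ z', WayBelow z' z ∧ r < l z' := by
  obtain ⟨f, hf, hs⟩ := CuSemigroup.O2 z
  have hm : Monotone f := monotone_nat_of_le_succ fun n => wb_le (hf n)
  rw [hl.2.2.2 f z hm hs] at hr
  obtain ⟨n, hn⟩ := lt_iSup_iff.1 hr
  exact ⟨f n, wb_trans (hf n) (hs.1 ⟨n + 1, rfl⟩), hn⟩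

theorem fun_nsmul {S : Type*} [AddCommMonoid S] [PartialOrder S]
    {l : S → ENNReal} (hl : IsFunctional l) (n : ℕ) (x : S) : l (n • x) = n * l x := by
  induction n with
  | zero => simp [hl.1]
  | succ k ih => rw [succ_nsmul, hl.2.1, ih]; push_cast; ring

theorem fun_scale {S : Type*} [AddCommMonoid S] [PartialOrder S]
    {l : S → ENNReal} (hl : IsFunctional l) (t : ENNReal) : IsFunctional (fun s => t * l s) := by
  refine ⟨by simp [hl.1], fun x y => by simp [hl.2.1, mul_add],
    fun x y h => mul_le_mul_right (hl.2.2.1 x y h) t, fun f s hf hs => ?_⟩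
  simp only [hl.2.2.2 f s hf hs, ENNReal.mul_iSup]

theorem zero_case {S : Type*} [AddCommMonoid S] [PartialOrder S]
    {lam mu : S → ENNReal} (hlam : IsFunctional lam) (hmu : IsFunctional mu)
    {y : S} (h0 : lam y = 0) (h1 : mu y ≠ 0)
    {eps : ENNReal} (heps : 0 < eps) :
    ∃ w : S, lam w < eps ∧ 1 / eps < mu w := by
  have hfin : 1 / eps ≠ ⊤ := by simp [heps.ne']
  obtain ⟨n, hn⟩ := ENNReal.exists_nat_mul_gt h1 hfin
  exact ⟨n • y, by simp [fun_nsmul hlam, h0, heps], by rw [fun_nsmul hmu]; exact hn⟩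

theorem core_case {S : Type*} [AddCommMonoid S] [PartialOrder S] [CuSemigroup S] (h5 : O5 S)
    {lam mu : S → ENNReal} (hlam : IsFunctional lam) (hmu : IsFunctional mu)
    (hlamdf : DenselyFinite lam) (hmudf : DenselyFinite mu)
    (hmune : ∃ s : S, mu s ≠ 0)
    (hno : ∀ s : ENNReal, 0 < s → ¬ ∀ x, s * lam x ≤ mu x)
    (hed : ∀ x y : S, min (lam x) (lam y) = ⨆ z ∈ {w : S | w ≤ x ∧ w ≤ y}, lam z)
    (eps : ENNReal) (heps : 0 < eps) :
    ∃ w : S, lam w < eps ∧ 1 / eps < mu w := by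
  obtain ⟨y0, hy0⟩ := hmune
  obtain ⟨y, hyw, hy⟩ := fun_approx hmu (pos_iff_ne_zero.2 hy0)
  by_cases ha0 : lam y = 0
  · exact zero_case hlam hmu ha0 hy.ne' heps
  have hE : 1 / eps ≠ ⊤ := by simp [heps.ne']
  obtain ⟨a, ha⟩ := ennreal_lift (hlamdf y ⟨_, hyw⟩)
  obtain ⟨b, hb⟩ := ennreal_lift (hmudf y ⟨_, hyw⟩)
  obtain ⟨E, hE⟩ := ennreal_lift hE
  have ha' : 0 < a := by
    rw [← ha] at ha0; exact pos_iff_ne_zero.2 (by simpa using ha0)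
  have hb' : 0 < b := by rw [← hb] at hy; simpa using hy
  have hs : 0 < b / (4 * a) := by positivity
  have := hno ((b / (4 * a) : NNReal) : ENNReal) (by exact_mod_cast hs)
  push Not at this
  obtain ⟨x0, hx0⟩ := this
  obtain ⟨x, hxw, hx⟩ := fun_approx (fun_scale hlam _) hx0
  have hx : mu x < ((b / (4 * a) : NNReal) : ENNReal) * lam x :=
    (hmu.2.2.1 _ _ (wb_le hxw)).trans_lt hx
  obtain ⟨p, hp⟩ := ennreal_lift (hlamdf x ⟨_, hxw⟩)
  obtain ⟨q, hq⟩ := ennreal_lift (hmudf x ⟨_, hxw⟩)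
  rw [← hp, ← hq] at hx
  have hx : q < b / (4 * a) * p := by exact_mod_cast hx
  have hp' : 0 < p := by
    rcases eq_or_ne p 0 with h | h
    · simp [h] at hx
    · exact pos_iff_ne_zero.2 h
  have hx2 : 4 * a * q < b * p := by
    have : b / (4 * a) * p = b * p / (4 * a) := by ring
    rw [this, lt_div_iff₀ (by positivity)] at hx
    linarith
  -- choose m
  obtain ⟨m, hm⟩ := exists_nat_gt (max (p / a) (2 * E / b))
  have hm1 : p < m * a := by
    rw [← div_lt_iff₀ ha']; exact (le_max_left _ _).trans_lt hm
  have hm2 : 2 * E < m * b := by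
    rw [← div_lt_iff₀ hb']; exact (le_max_right _ _).trans_lt hm
  -- choose k
  set k := ⌈(m * a / p : NNReal)⌉₊ with hk
  have hk1 : m * a ≤ k * p := by
    rw [← div_le_iff₀ hp']; exact Nat.le_ceil _
  have hk2 : k * p < 2 * (m * a) := by
    have h1 : (k : NNReal) < m * a / p + 1 := Nat.ceil_lt_add_one (by positivity)
    have h2 : (k : NNReal) * p < (m * a / p + 1) * p := by gcongr
    have h3 : (m * a / p + 1) * p = m * a + p := by field_simp
    rw [h3] at h2
    linarith
  have hlm : lam (m • y) = ((m * a : NNReal) : ENNReal) := by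
    rw [fun_nsmul hlam, ← ha]; push_cast; rfl
  have hlk : lam (k • x) = ((k * p : NNReal) : ENNReal) := by
    rw [fun_nsmul hlam, ← hp]; push_cast; rfl
  have hmm : mu (m • y) = ((m * b : NNReal) : ENNReal) := by
    rw [fun_nsmul hmu, ← hb]; push_cast; rfl
  have hmk : mu (k • x) = ((k * q : NNReal) : ENNReal) := by
    rw [fun_nsmul hmu, ← hq]; push_cast; rfl
  have hmin := hed (k • x) (m • y)
  rw [hlm, hlk, min_eq_right (by exact_mod_cast hk1)] at hmin
  have hma : 0 < m * a := lt_of_le_of_lt (zero_le) hm1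
  have hlt : ((m * a : NNReal) : ENNReal) - eps < ((m * a : NNReal) : ENNReal) :=
    ENNReal.sub_lt_self ENNReal.coe_ne_top (by exact_mod_cast hma.ne') heps.ne'
  rw [hmin] at hlt
  obtain ⟨z, hz⟩ := lt_iSup_iff.1 hlt
  obtain ⟨⟨hzx, hzy⟩, hz⟩ := lt_iSup_iff.1 hz
  rw [← hmin] at hz
  obtain ⟨z', hzz, hz'⟩ := fun_approx hlam hz
  obtain ⟨w, hw1, hw2⟩ := h5 z' z (m • y) hzz hzy
  refine ⟨w, ?_, ?_⟩
  · have h1 := hlam.2.2.1 _ _ hw1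
    rw [hlam.2.1, hlm] at h1
    by_contra hcon
    push Not at hcon
    have hzt : lam z' ≠ ⊤ := hlamdf _ ⟨_, hzz⟩
    have h2 : lam z' + eps ≤ ((m * a : NNReal) : ENNReal) := (by gcongr : lam z' + eps ≤ lam z' + lam w).trans h1
    have heps' : eps ≠ ⊤ := by
      rintro rfl
      rw [add_top] at h2
      exact ENNReal.coe_ne_top (top_le_iff.1 h2)
    exact absurd hz' (not_lt.2 (ENNReal.le_sub_of_add_le_right heps' h2))
  · have h1 := hmu.2.2.1 _ _ hw2
    have h2 := hmu.2.2.1 _ _ hzx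
    rw [hmu.2.1, hmm] at h1
    rw [hmk] at h2
    have h3 := h1.trans (add_le_add_left h2 (mu w))
    rw [← hE]
    by_contra hcon
    push Not at hcon
    have h4 := h3.trans (add_le_add_right hcon _)
    have h4 : m * b ≤ k * q + E := by exact_mod_cast h4
    -- k q * 4a ≤ k b p < 2 m a b
    have h5 : (k : NNReal) * q * 4 * a ≤ 2 * (m * a) * b := by
      calc (k : NNReal) * q * 4 * a = k * (4 * a * q) := by ring
        _ ≤ k * (b * p) := by gcongr
        _ = (k * p) * b := by ring
        _ ≤ _ := by gcongr
    have h6 : 2 * (k * q) ≤ m * b := by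
      refine le_of_mul_le_mul_right ?_ (show 0 < 2 * a by positivity)
      calc _ = (k : NNReal) * q * 4 * a := by ring
        _ ≤ _ := h5
        _ = _ := by ring
    have h7 : 2 * (m * b) ≤ 2 * (k * q) + 2 * E := by rw [← mul_add]; gcongr
    have : 2 * (m * b) < m * b + m * b := h7.trans_lt (add_lt_add_of_le_of_lt h6 hm2)
    rw [two_mul] at this
    exact lt_irrefl _ this

/-- In a Cu-semigroup with (O5) whose functionals are algebraically ordered, given a
densely finite extreme functional `λ` satisfying Edwards' condition (together with all
its positive scalar multiples), and a densely finite nonzero functional `μ` that is not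
a positive scalar multiple of `λ`, for every `ε ∈ (0,∞)` there exists `w` with
`λ(w) < ε` and `μ(w) > 1/ε`. -/
theorem exists_lam_lt_mu_gt {S : Type*} [AddCommMonoid S] [PartialOrder S]
    [CuSemigroup S] (h5 : O5 S)
    (halg : ∀ nu₁ nu₂ : S → ENNReal, IsFunctional nu₁ → IsFunctional nu₂ →
      (∀ s, nu₁ s ≤ nu₂ s) →
      ∃ nu : S → ENNReal, IsFunctional nu ∧ ∀ s, nu₁ s + nu s = nu₂ s)
    (lam mu : S → ENNReal) (hlam : IsFunctional lam) (hmu : IsFunctional mu)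
    (hlamdf : DenselyFinite lam) (hmudf : DenselyFinite mu)
    (hext : ExtremeFunctional lam)
    (hmune : ∃ s : S, mu s ≠ 0)
    (hnotmult : ∀ c : ENNReal, 0 < c → c ≠ ⊤ → ¬ (∀ s : S, mu s = c * lam s))
    (hedwards : ∀ c : ENNReal, 0 < c → c ≠ ⊤ → ∀ x y : S,
      min (c * lam x) (c * lam y) = ⨆ z ∈ {w : S | w ≤ x ∧ w ≤ y}, c * lam z)
    (eps : ENNReal) (heps : 0 < eps) (heps' : eps ≠ ⊤) :
    ∃ w : S, lam w < eps ∧ 1 / eps < mu w := by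
  by_cases hl0 : ∀ s, lam s = 0
  · obtain ⟨s, hs⟩ := hmune
    exact zero_case hlam hmu (hl0 s) hs heps
  push Not at hl0
  obtain ⟨x0, hx0⟩ := hl0
  obtain ⟨x, hxw, hx⟩ := fun_approx hlam (pos_iff_ne_zero.2 hx0)
  set T : Set ENNReal := {t | ∀ s, t * lam s ≤ mu s} with hT
  set t := sSup T with ht
  have htT : ∀ s, t * lam s ≤ mu s := by
    intro s
    rw [ht, ENNReal.sSup_mul]
    exact iSup₂_le fun i hi => hi s
  have htfin : t ≠ ⊤ := by
    intro h
    have h1 := htT x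
    rw [h, ENNReal.top_mul hx.ne'] at h1
    exact hmudf x ⟨_, hxw⟩ (top_le_iff.1 h1)
  obtain ⟨nu, hnu, hsum⟩ := halg _ mu (fun_scale hlam t) hmu htT
  have hle : ∀ s, nu s ≤ mu s := fun s => by rw [← hsum s]; exact le_add_self
  have hed : ∀ x y : S, min (lam x) (lam y) = ⨆ z ∈ {w : S | w ≤ x ∧ w ≤ y}, lam z := by
    simpa using hedwards 1 (by simp) (by simp)
  obtain ⟨w, hw1, hw2⟩ := core_case h5 hlam hnu hlamdf
    (fun s hs h => hmudf s hs (top_le_iff.1 (h ▸ hle s)))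
    (by
      by_contra hcon
      push Not at hcon
      rcases eq_or_ne t 0 with h0 | h0
      · obtain ⟨s, hs⟩ := hmune
        apply hs
        rw [← hsum s, hcon s, h0]; simp
      · exact hnotmult t (pos_iff_ne_zero.2 h0) htfin fun s => by rw [← hsum s, hcon s, add_zero])
    (by
      intro s hs hcon
      have hmem : t + s ∈ T := by
        intro r
        rw [add_mul, ← hsum r]
        exact add_le_add_right (hcon r) _
      have h1 : t + s ≤ t := le_sSup hmem
      exact absurd h1 (not_le.2 (ENNReal.lt_add_right htfin hs.ne')))
    hed eps heps
  exact ⟨w, hw1, hw2.trans_le (hle w)⟩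
end
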